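/- Let n, m ≥ 1 and let u = (u_1,…,u_m) be a solution of system (S) on ℝⁿ. Write x = (x', x_n) ∈ ℝ^{n−1} × ℝ, and for R > 0 and x_n ∈ ℝ set Γ_R(x_n) := ∫_{B_R(0)⊂ℝ^{n−1}} ( ∑_{i=1}^m [ (1/2)Φ(|∇u_i(x',x_n)|²) − Φ'(|∇u_i(x',x_n)|²)|∂_{x_n}u_i(x',x_n)|² ] − H̃(u(x',x_n)) ) dx'. Assume: (i) for every x_n the integrand is integrable over ℝ^{n−1}, so that G(x_n) := lim_{R→∞} Γ_R(x_n) exists and is finite; (ii) for every R > 0 differentiation of Γ_R under the integral sign in x_n is justified; and (iii) for every x_n ∈ ℝ there is a sequence R_k → ∞ along which ∫_0^{x_n} ∫_{∂B_{R_k}(0)⊂ℝ^{n−1}} ∑_{i=1}^m Φ'(|∇u_i|²)(∂_{ν_{x'}}u_i)(∂_{x_n}u_i) dS(x') dt → 0, where ∂_{ν_{x'}} denotes the outward normal derivative in the x'-variables. Then G(x_n) = G(0) for all x_n ∈ ℝ, i.e. the Hamiltonian ∫_{ℝ^{n−1}} ( ∑_{i=1}^m [ (1/2)Φ(|∇u_i|²)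 − Φ'(|∇u_i|²)|∂_{x_n}u_i|² ] − H̃(u) ) dx' is constant in x_n. -/

import Mathlib

open MeasureTheory Metric Finset Filter
open scoped RealInnerProductSpace

noncomputable section

/-- Divergence of a vector field on Euclidean space. -/
def vdiv {N : ℕ} (F : EuclideanSpace ℝ (Fin N) → EuclideanSpace ℝ (Fin N))
    (x : EuclideanSpace ℝ (Fin N)) : ℝ :=
  ∑ i, fderiv ℝ F x (EuclideanSpace.single i 1) i

/-- The point `(x', t) ∈ ℝ^{n} × ℝ = ℝ^{n+1}`. -/
def emb {n : ℕ} (x' : EuclideanSpace ℝ (Fin n)) (t : ℝ) : EuclideanSpace ℝ (Fin (n + 1)) :=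
  (EuclideanSpace.equiv (Fin (n + 1)) ℝ).symm (Fin.snoc (fun j => x' j) t)

/-- The integrand of the Hamiltonian:
`∑ᵢ [ (1/2)Φ(|∇uᵢ|²) - Φ'(|∇uᵢ|²)|∂_{x_n}uᵢ|² ] - H̃(u)` evaluated at `(x', t)`. -/
def hamIntegrand {n m : ℕ} (Φ : ℝ → ℝ) (Ht : (Fin m → ℝ) → ℝ)
    (u : Fin m → EuclideanSpace ℝ (Fin (n + 1)) → ℝ)
    (x' : EuclideanSpace ℝ (Fin n)) (t : ℝ) : ℝ :=
  (∑ i, ((1 : ℝ) / 2 * Φ (‖gradient (u i) (emb x' t)‖ ^ 2)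
      - deriv Φ (‖gradient (u i) (emb x' t)‖ ^ 2)
        * (fderiv ℝ (u i) (emb x' t) (EuclideanSpace.single (Fin.last n) 1)) ^ 2))
    - Ht (fun j => u j (emb x' t))

/-!
Invariance of the system under translations in `x_n` produces, by Noether's theorem, the vector
field `X = (∑ᵢ (1/2)Φ(|∇uᵢ|²) - H̃(u)) eₙ - ∑ᵢ ∂ₙuᵢ Φ'(|∇uᵢ|²) ∇uᵢ`, whose divergence vanishes on
solutions. Its last component is the integrand of the Hamiltonian, and its normal component on a
lateral boundary is minus the integrand in assumption (iii). Integrating `div X = 0` over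
`B_R × [0, t]` therefore compares the Hamiltonians of the two horizontal balls up to the lateral
term, and `R → ∞` along the given sequence concludes.

The divergence theorem on balls comes from integrating by parts against the `C¹` weights
`(R² - |x|²)₊²` and differentiating in `R` in polar coordinates. Polar coordinates involve the
surface measure `toSphere`, while (iii) uses the Hausdorff measure with Mathlib's normalisation.
Both are rotation invariant, and by Christensen's theorem two uniformly distributed measures are
proportional, so the divergence theorem holds with some constant in front of the boundary term,
which is harmless here.
-/

section UniformlyDistributed

variable {X : Type*} [PseudoMetricSpace X] [MeasurableSpace X]

/-- A measure is *uniformly distributed* if all balls of the same radius have the same measure.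
Over a compact space, finite measures of this kind agree up to scaling (Christensen). -/
def IsUniformlyDistributed (μ : Measure X) : Prop :=
  ∀ (x y : X) (r : ℝ), μ (ball x r) = μ (ball y r)

variable [BorelSpace X]

lemma isUniformlyDistributed_of_forall_exists_measurePreserving {μ : Measure X}
    (h : ∀ x y, ∃ e : X ≃ᵢ X, e x = y ∧ MeasurePreserving e μ μ) :
    IsUniformlyDistributed μ := by
  intro x y r
  obtain ⟨e, rfl, he⟩ := h x y
  rw [← he.measure_preimage (s := ball (e x) r) measurableSet_ball.nullMeasurableSet,
    e.preimage_ball, e.symm_apply_apply]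

lemma abs_integral_fst_sub_integral_snd_le [CompactSpace X] {τ : Measure (X × X)}
    [IsFiniteMeasure τ] {f : X → ℝ} (hf : Continuous f) {ε : ℝ}
    (hτ : ∀ᵐ p ∂τ, |f p.1 - f p.2| ≤ ε) :
    |∫ x, f x ∂τ.fst - ∫ x, f x ∂τ.snd| ≤ ε * τ.real Set.univ := by
  obtain ⟨C, hC⟩ := isCompact_univ.exists_bound_of_continuousOn hf.continuousOn
  have hbdd : ∀ g : X × X → X, Measurable g → Integrable (fun p => f (g p)) τ := fun g hg =>
    .of_bound (hf.measurable.comp hg).aestronglyMeasurable C (.of_forall fun p => hC _ trivial)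
  rw [Measure.fst, Measure.snd, integral_map measurable_fst.aemeasurable
      hf.measurable.aestronglyMeasurable, integral_map measurable_snd.aemeasurable
      hf.measurable.aestronglyMeasurable,
    ← integral_sub (hbdd _ measurable_fst) (hbdd _ measurable_snd)]
  exact norm_integral_le_of_norm_le_const (f := fun p : X × X => f p.1 - f p.2) hτ

lemma IsUniformlyDistributed.fst_restrict_prod [SecondCountableTopology X] {μ ν : Measure X}
    [SFinite ν] (hν : IsUniformlyDistributed ν) (x₀ : X) (r : ℝ) :
    ((μ.prod ν).restrict {p | dist p.1 p.2 < r}).fst = ν (ball x₀ r) • μ := by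
  have hD : MeasurableSet {p : X × X | dist p.1 p.2 < r} :=
    (isOpen_lt continuous_dist continuous_const).measurableSet
  ext s hs
  have hsection : ∀ x, ν (Prod.mk x ⁻¹' (Prod.fst ⁻¹' s ∩ {p : X × X | dist p.1 p.2 < r}))
      = s.indicator (fun _ => ν (ball x₀ r)) x := by
    intro x
    by_cases hx : x ∈ s
    · rw [Set.indicator_of_mem hx, hν x₀ x]
      congr 1
      ext y
      simp [hx, dist_comm]
    · convert measure_empty (μ := ν) using 2
      · ext y
        simp [hx]
      · simp [hx]
  rw [Measure.fst_apply hs, Measure.restrict_apply (measurable_fst hs),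
    Measure.prod_apply ((measurable_fst hs).inter hD)]
  simp_rw [hsection]
  rw [lintegral_indicator_const hs, Measure.smul_apply, smul_eq_mul]

lemma IsUniformlyDistributed.snd_restrict_prod [SecondCountableTopology X] {μ ν : Measure X}
    [SFinite μ] [SFinite ν] (hμ : IsUniformlyDistributed μ) (x₀ : X) (r : ℝ) :
    ((μ.prod ν).restrict {p | dist p.1 p.2 < r}).snd = μ (ball x₀ r) • ν := by
  have hD : MeasurableSet {p : X × X | dist p.1 p.2 < r} :=
    (isOpen_lt continuous_dist continuous_const).measurableSet
  rw [← hμ.fst_restrict_prod x₀ r, ← Measure.fst_map_swap, ← Measure.prod_swap (μ := μ),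
    Measure.restrict_map measurable_swap hD]
  simp [Set.preimage, dist_comm]

lemma IsUniformlyDistributed.abs_mul_integral_sub_mul_integral_le [CompactSpace X]
    {μ ν : Measure X} [IsFiniteMeasure μ] [IsFiniteMeasure ν] [ν.IsOpenPosMeasure]
    (hμ : IsUniformlyDistributed μ) (hν : IsUniformlyDistributed ν) {f : X → ℝ}
    (hf : Continuous f) {r ε : ℝ} (hr : 0 < r) (hfr : ∀ x y, dist x y < r → |f x - f y| ≤ ε) :
    |ν.real Set.univ * ∫ x, f x ∂μ - μ.real Set.univ * ∫ x, f x ∂ν|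
      ≤ ε * (μ.real Set.univ * ν.real Set.univ) := by
  rcases isEmpty_or_nonempty X with _ | ⟨⟨x₀⟩⟩
  · simp [Measure.eq_zero_of_isEmpty]
  set D : Set (X × X) := {p | dist p.1 p.2 < r}
  have hD : MeasurableSet D := (isOpen_lt continuous_dist continuous_const).measurableSet
  set τ := (μ.prod ν).restrict D
  set a := ν.real (ball x₀ r)
  set b := μ.real (ball x₀ r)
  have ha : 0 < a := ENNReal.toReal_pos (measure_ball_pos ν x₀ hr).ne' (measure_ne_top _ _)
  have hfst : τ.fst = ν (ball x₀ r) • μ := hν.fst_restrict_prod x₀ r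
  have hsnd : τ.snd = μ (ball x₀ r) • ν := hμ.snd_restrict_prod x₀ r
  have hτa : τ.real Set.univ = a * μ.real Set.univ := by
    rw [measureReal_def, ← Measure.fst_univ, hfst]
    simp [a, measureReal_def]
  have hτb : τ.real Set.univ = b * ν.real Set.univ := by
    rw [measureReal_def, ← Measure.snd_univ, hsnd]
    simp [b, measureReal_def]
  have key := abs_integral_fst_sub_integral_snd_le (τ := τ) hf
    ((ae_restrict_iff' hD).2 (.of_forall fun p hp => hfr p.1 p.2 hp))
  rw [hfst, hsnd, integral_smul_measure, integral_smul_measure, hτa] at key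
  change |a * _ - b * _| ≤ _ at key
  refine le_of_mul_le_mul_left ?_ ha
  calc a * |ν.real Set.univ * ∫ x, f x ∂μ - μ.real Set.univ * ∫ x, f x ∂ν|
      = ν.real Set.univ * |a * ∫ x, f x ∂μ - b * ∫ x, f x ∂ν| := by
        rw [← abs_of_pos ha, ← abs_mul, abs_of_pos ha,
          ← abs_of_nonneg (measureReal_nonneg (μ := ν)), ← abs_mul,
          abs_of_nonneg (measureReal_nonneg (μ := ν))]
        congr 1
        linear_combination (hτb.symm.trans hτa) * ∫ x, f x ∂ν
    _ ≤ ν.real Set.univ * (ε * (a * μ.real Set.univ)) := by gcongr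
    _ = a * (ε * (μ.real Set.univ * ν.real Set.univ)) := by ring

theorem IsUniformlyDistributed.measure_univ_smul_eq [CompactSpace X] {μ ν : Measure X}
    [IsFiniteMeasure μ] [IsFiniteMeasure ν] [ν.IsOpenPosMeasure]
    (hμ : IsUniformlyDistributed μ) (hν : IsUniformlyDistributed ν) :
    ν Set.univ • μ = μ Set.univ • ν := by
  have := μ.smul_finite (measure_ne_top ν Set.univ)
  have := ν.smul_finite (measure_ne_top μ Set.univ)
  refine ext_of_forall_integral_eq_of_IsFiniteMeasure fun f => ?_
  rw [integral_smul_measure, integral_smul_measure, smul_eq_mul, smul_eq_mul, ← sub_eq_zero,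
    ← abs_nonpos_iff]
  have hlim : Tendsto (fun ε => ε * (μ.real Set.univ * ν.real Set.univ))
      (nhdsWithin 0 (Set.Ioi 0)) (nhds 0) :=
    (Continuous.tendsto' (by fun_prop) 0 0 (by simp)).mono_left nhdsWithin_le_nhds
  refine ge_of_tendsto hlim (eventually_mem_nhdsWithin.mono fun ε hε => ?_)
  obtain ⟨r, hr, hfr⟩ := uniformContinuous_iff.1
    (CompactSpace.uniformContinuous_of_continuous f.continuous) ε hε
  exact hμ.abs_mul_integral_sub_mul_integral_le hν f.continuous hr fun x y hxy => (hfr hxy).le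

end UniformlyDistributed

section HausdorffMeasure

lemma map_coe_hausdorffMeasure {X : Type*} [EMetricSpace X] [MeasurableSpace X] [BorelSpace X]
    {d : ℝ} (hd : 0 ≤ d) (s : Set X) : (μH[d] : Measure s).map (↑) = μH[d].restrict s := by
  simpa using (isometry_subtype_coe (s := s)).map_hausdorffMeasure (.inl hd)

lemma hausdorffMeasure_coe_univ {X : Type*} [EMetricSpace X] [MeasurableSpace X] [BorelSpace X]
    {d : ℝ} (hd : 0 ≤ d) (s : Set X) : (μH[d] : Measure s) Set.univ = μH[d] s := by
  simpa using ((isometry_subtype_coe (s := s)).hausdorffMeasure_image (.inl hd) Set.univ).symm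

variable {E : Type*} [NormedAddCommGroup E] [NormedSpace ℝ E] [MeasurableSpace E] [BorelSpace E]
  {d : ℝ}

lemma hausdorffMeasure_eq_smul_map_smul (hd : 0 ≤ d) {R : ℝ} (hR : 0 < R) :
    (μH[d] : Measure E) = ENNReal.ofReal (R ^ d) • μH[d].map (R • ·) := by
  ext t ht
  have h := Measure.hausdorffMeasure_smul₀ (𝕜 := ℝ) hd hR.ne' ((R • ·) ⁻¹' t : Set E)
  rw [← Set.image_smul, Set.image_preimage_eq _ (MulAction.bijective₀ hR.ne').surjective] at h
  rw [Measure.smul_apply, Measure.map_apply (measurable_const_smul R) ht, h, ENNReal.smul_def]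
  congr 1
  rw [ENNReal.ofReal, ENNReal.coe_inj, Real.toNNReal_rpow_of_nonneg hR.le]
  congr 1
  ext
  simp [abs_of_pos hR, hR.le]

lemma setIntegral_sphere_hausdorffMeasure (hd : 0 ≤ d) {R : ℝ} (hR : 0 < R) (g : E → ℝ) :
    ∫ x in sphere 0 R, g x ∂μH[d] = R ^ d * ∫ x in sphere 0 1, g (R • x) ∂μH[d] := by
  have hsphere : (R • ·) ⁻¹' sphere (0 : E) R = sphere 0 1 := by
    ext x
    simp [norm_smul, abs_of_pos hR, hR.ne']
  have hemb : MeasurableEmbedding (R • · : E → E) :=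
    (Homeomorph.smulOfNeZero R hR.ne').measurableEmbedding
  conv_lhs => rw [hausdorffMeasure_eq_smul_map_smul hd hR]
  rw [Measure.restrict_smul, hemb.restrict_map, hsphere, integral_smul_measure,
    hemb.integral_map, ENNReal.toReal_ofReal (Real.rpow_nonneg hR.le d), smul_eq_mul]

end HausdorffMeasure

section SphereMeasure

variable {E : Type*} [NormedAddCommGroup E] [InnerProductSpace ℝ E]

/-- The restriction of a linear isometry to the unit sphere. -/
def sphereIsometryEquiv (L : E ≃ₗᵢ[ℝ] E) : sphere (0 : E) 1 ≃ᵢ sphere (0 : E) 1 where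
  toFun x := ⟨L x, by simp⟩
  invFun x := ⟨L.symm x, by simp⟩
  left_inv x := by simp
  right_inv x := by simp
  isometry_toFun x y := by simp [Subtype.edist_eq]

lemma exists_sphereIsometryEquiv_apply_eq (x y : sphere (0 : E) 1) :
    ∃ L : E ≃ₗᵢ[ℝ] E, sphereIsometryEquiv L x = y :=
  ⟨(ℝ ∙ ((x : E) - y))ᗮ.reflection, Subtype.ext (Submodule.reflection_sub (by simp))⟩

open Pointwise in
lemma preimage_Ioo_smul_image_sphere (L : E ≃ₗᵢ[ℝ] E) (s : Set (sphere (0 : E) 1)) :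
    L ⁻¹' (Set.Ioo (0 : ℝ) 1 • ((↑) '' s : Set E))
      = Set.Ioo (0 : ℝ) 1 • ((↑) '' (sphereIsometryEquiv L ⁻¹' s) : Set E) := by
  ext x
  simp only [Set.mem_smul, Set.mem_preimage, Set.mem_image]
  constructor
  · rintro ⟨r, hr, _, ⟨w, hw, rfl⟩, h⟩
    refine ⟨r, hr, _, ⟨(sphereIsometryEquiv L).symm w, by simpa using hw, rfl⟩, ?_⟩
    apply L.injective
    rw [← h]
    simp [sphereIsometryEquiv, IsometryEquiv.symm]
  · rintro ⟨r, hr, _, ⟨w, hw, rfl⟩, rfl⟩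
    exact ⟨r, hr, _, ⟨_, hw, rfl⟩, (map_smul L r (w : E)).symm⟩

lemma sphere_inter_inner_nonpos_subset {v : E} (hv : ‖v‖ = 1) :
    {x ∈ sphere (0 : E) 1 | ⟪v, x⟫ ≤ 0}
      ⊆ (fun w : (ℝ ∙ v)ᗮ => stereoInvFunAux v w) '' closedBall 0 2 := by
  rintro x ⟨hx, hvx⟩
  have hxv : x ≠ v := by
    rintro rfl
    rw [real_inner_self_eq_norm_sq, hv] at hvx
    norm_num at hvx
  refine ⟨stereoToFun v x, ?_, congrArg Subtype.val (stereo_left_inv hv (x := ⟨x, hx⟩) hxv)⟩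
  have hproj : ‖(ℝ ∙ v)ᗮ.orthogonalProjectionOnto x‖ ≤ 1 :=
    (Submodule.norm_orthogonalProjectionOnto_apply_le _ x).trans_eq (mem_sphere_zero_iff_norm.1 hx)
  rw [mem_closedBall_zero_iff, stereoToFun_apply, norm_smul, Real.norm_of_nonneg (by
    rw [innerSL_apply_apply]; exact div_nonneg zero_le_two (by linarith)), innerSL_apply_apply]
  calc 2 / (1 - ⟪v, x⟫) * ‖(ℝ ∙ v)ᗮ.orthogonalProjectionOnto x‖
      ≤ 2 / 1 * 1 := by gcongr; linarith
    _ = 2 := by norm_num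

lemma ball_subset_orthogonalProjectionOnto_image_sphere {v : E} (hv : ‖v‖ = 1) :
    ball 0 1 ⊆ (ℝ ∙ v)ᗮ.orthogonalProjectionOnto '' sphere (0 : E) 1 := by
  intro y hy
  have hy1 : ‖(y : E)‖ ^ 2 ≤ 1 := pow_le_one₀ (norm_nonneg _) (mem_ball_zero_iff.1 hy).le
  refine ⟨y + √(1 - ‖(y : E)‖ ^ 2) • v, ?_, ?_⟩
  · have hvy : ⟪(y : E), v⟫ = 0 := Submodule.mem_orthogonal_singleton_iff_inner_left.1 y.2
    rw [mem_sphere_zero_iff_norm, ← sq_eq_sq₀ (norm_nonneg _) zero_le_one, norm_add_sq_real,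
      inner_smul_right, hvy, norm_smul, hv, mul_one, Real.norm_eq_abs, sq_abs,
      Real.sq_sqrt (sub_nonneg.2 hy1)]
    ring
  · simp [Submodule.orthogonalProjectionOnto_orthogonalComplement_singleton_eq_zero]

variable [MeasurableSpace E] [BorelSpace E]

lemma isUniformlyDistributed_hausdorffMeasure_sphere (d : ℝ) :
    IsUniformlyDistributed (μH[d] : Measure (sphere (0 : E) 1)) :=
  isUniformlyDistributed_of_forall_exists_measurePreserving fun x y =>
    let ⟨_, hL⟩ := exists_sphereIsometryEquiv_apply_eq x y
    ⟨_, hL, IsometryEquiv.measurePreserving_hausdorffMeasure _ _⟩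

variable [FiniteDimensional ℝ E]

lemma measurePreserving_sphereIsometryEquiv_toSphere (L : E ≃ₗᵢ[ℝ] E) :
    MeasurePreserving (sphereIsometryEquiv L) (volume : Measure E).toSphere
      (volume : Measure E).toSphere := by
  have hL := (sphereIsometryEquiv L).continuous.measurable
  refine ⟨hL, ?_⟩
  ext s hs
  rw [Measure.map_apply hL hs, Measure.toSphere_apply' _ hs, Measure.toSphere_apply' _ (hL hs),
    ← preimage_Ioo_smul_image_sphere,
    L.measurePreserving.measure_preimage_emb L.toHomeomorph.measurableEmbedding]

lemma isUniformlyDistributed_toSphere :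
    IsUniformlyDistributed (volume : Measure E).toSphere :=
  isUniformlyDistributed_of_forall_exists_measurePreserving fun x y =>
    let ⟨L, hL⟩ := exists_sphereIsometryEquiv_apply_eq x y
    ⟨_, hL, measurePreserving_sphereIsometryEquiv_toSphere L⟩

variable {k : ℕ} [Fact (Module.finrank ℝ E = k + 1)]

lemma isAddHaarMeasure_hausdorffMeasure_orthogonal {v : E} (hv : v ≠ 0) :
    (μH[k] : Measure (ℝ ∙ v)ᗮ).IsAddHaarMeasure := by
  rw [← Submodule.finrank_orthogonal_span_singleton (𝕜 := ℝ) (n := k) hv]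
  infer_instance

lemma hausdorffMeasure_sphere_inter_inner_nonpos_lt_top {v : E} (hv : ‖v‖ = 1) :
    μH[k] {x ∈ sphere (0 : E) 1 | ⟪v, x⟫ ≤ 0} < ⊤ := by
  have := isAddHaarMeasure_hausdorffMeasure_orthogonal (k := k)
    (norm_ne_zero_iff.1 (hv ▸ one_ne_zero))
  have hsmooth : ContDiff ℝ 1 fun w : (ℝ ∙ v)ᗮ => stereoInvFunAux v w :=
    contDiff_stereoInvFunAux.comp (ℝ ∙ v)ᗮ.subtypeL.contDiff
  have hcompact : IsCompact (closedBall (0 : (ℝ ∙ v)ᗮ) 2) := isCompact_closedBall 0 2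
  obtain ⟨K, hK⟩ :=
    hsmooth.locallyLipschitz.locallyLipschitzOn.exists_lipschitzOnWith_of_compact hcompact
  refine (measure_mono (sphere_inter_inner_nonpos_subset hv)).trans_lt
    ((hK.hausdorffMeasure_image_le k.cast_nonneg).trans_lt ?_)
  exact ENNReal.mul_lt_top (by simp) hcompact.measure_lt_top

lemma hausdorffMeasure_sphere_lt_top : μH[k] (sphere (0 : E) 1) < ⊤ := by
  have : Nontrivial E :=
    Module.nontrivial_of_finrank_eq_succ (Fact.out : Module.finrank ℝ E = k + 1)
  obtain ⟨v, hv⟩ := exists_norm_eq E zero_le_one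
  refine (measure_mono (t := {x ∈ sphere (0 : E) 1 | ⟪v, x⟫ ≤ 0} ∪
    {x ∈ sphere (0 : E) 1 | ⟪-v, x⟫ ≤ 0}) fun x hx => ?_).trans_lt (measure_union_lt_top
      (hausdorffMeasure_sphere_inter_inner_nonpos_lt_top hv)
      (hausdorffMeasure_sphere_inter_inner_nonpos_lt_top (by rwa [norm_neg])))
  rcases le_total ⟪v, x⟫ 0 with h | h
  · exact .inl ⟨hx, h⟩
  · exact .inr ⟨hx, by rwa [inner_neg_left, neg_nonpos]⟩

lemma hausdorffMeasure_sphere_pos : 0 < μH[k] (sphere (0 : E) 1) := by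
  have : Nontrivial E :=
    Module.nontrivial_of_finrank_eq_succ (Fact.out : Module.finrank ℝ E = k + 1)
  obtain ⟨v, hv⟩ := exists_norm_eq E zero_le_one
  have := isAddHaarMeasure_hausdorffMeasure_orthogonal (k := k)
    (norm_ne_zero_iff.1 (hv ▸ one_ne_zero))
  calc 0 < μH[k] (ball (0 : (ℝ ∙ v)ᗮ) 1) := measure_ball_pos _ _ one_pos
    _ ≤ μH[k] ((ℝ ∙ v)ᗮ.orthogonalProjectionOnto '' sphere (0 : E) 1) :=
      measure_mono (ball_subset_orthogonalProjectionOnto_image_sphere hv)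
    _ ≤ μH[k] (sphere (0 : E) 1) :=
      hausdorffMeasure_orthogonalProjectionOnto_le _ _ _ k.cast_nonneg

theorem exists_toSphere_eq_smul_hausdorffMeasure :
    ∃ c : ENNReal, (volume : Measure E).toSphere = c • (μH[k] : Measure (sphere (0 : E) 1)) := by
  have htop : (μH[k] : Measure (sphere (0 : E) 1)) Set.univ < ⊤ :=
    (hausdorffMeasure_coe_univ k.cast_nonneg _).trans_lt hausdorffMeasure_sphere_lt_top
  have hpos : (μH[k] : Measure (sphere (0 : E) 1)) Set.univ ≠ 0 :=
    (hausdorffMeasure_sphere_pos.trans_eq (hausdorffMeasure_coe_univ k.cast_nonneg _).symm).ne'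
  have : IsFiniteMeasure (μH[k] : Measure (sphere (0 : E) 1)) := ⟨htop⟩
  have h := (isUniformlyDistributed_hausdorffMeasure_sphere (E := E) k).measure_univ_smul_eq
    isUniformlyDistributed_toSphere
  refine ⟨((μH[k] : Measure (sphere (0 : E) 1)) Set.univ)⁻¹ *
    (volume : Measure E).toSphere Set.univ, ?_⟩
  rw [mul_smul, h, smul_smul, ENNReal.inv_mul_cancel hpos htop.ne, one_smul]

theorem exists_integral_toSphere_eq_setIntegral_sphere :
    ∃ c : ℝ, ∀ (g : E → ℝ) (R : ℝ), 0 < R →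
      R ^ k * ∫ w : sphere (0 : E) 1, g (R • (w : E)) ∂(volume : Measure E).toSphere
        = c * ∫ x in sphere (0 : E) R, g x ∂μH[k] := by
  obtain ⟨c, hc⟩ := exists_toSphere_eq_smul_hausdorffMeasure (E := E) (k := k)
  refine ⟨c.toReal, fun g R hR => ?_⟩
  rw [setIntegral_sphere_hausdorffMeasure k.cast_nonneg hR, Real.rpow_natCast, hc,
    integral_smul_measure, ← map_coe_hausdorffMeasure k.cast_nonneg,
    (MeasurableEmbedding.subtype_coe isClosed_sphere.measurableSet).integral_map, smul_eq_mul]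
  ring

end SphereMeasure

section PolarCoordinates

variable {E : Type*} [NormedAddCommGroup E] [NormedSpace ℝ E] [FiniteDimensional ℝ E]
  [Nontrivial E] [MeasurableSpace E] [BorelSpace E] (μ : Measure E) [μ.IsAddHaarMeasure]
  {G : Type*} [NormedAddCommGroup G] [NormedSpace ℝ G]

lemma integral_volumeIoiPow (n : ℕ) (g : ℝ → G) :
    ∫ r, g r ∂Measure.volumeIoiPow n = ∫ r in Set.Ioi 0, r ^ n • g r := by
  simp only [Measure.volumeIoiPow, ENNReal.ofReal]
  rw [integral_withDensity_eq_integral_smul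
      (measurable_subtype_coe.pow_const _).real_toNNReal,
    integral_subtype_comap measurableSet_Ioi fun r => Real.toNNReal (r ^ n) • g r]
  refine setIntegral_congr_fun measurableSet_Ioi fun r hr => ?_
  rw [NNReal.smul_def, Real.coe_toNNReal _ (pow_nonneg hr.out.le _)]

lemma integral_eq_integral_Ioi_integral_toSphere {F : E → G} (hF : Integrable F μ) :
    ∫ x, F x ∂μ = ∫ r in Set.Ioi (0 : ℝ), r ^ (Module.finrank ℝ E - 1) •
      ∫ w : sphere (0 : E) 1, F (r • (w : E)) ∂μ.toSphere := by
  have hpolar := μ.measurePreserving_homeomorphUnitSphereProd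
  have hemb := (homeomorphUnitSphereProd E).measurableEmbedding
  let P : sphere (0 : E) 1 × Set.Ioi (0 : ℝ) → G := fun p => F (p.2.1 • p.1.1)
  have hP : ∀ x : ({0}ᶜ : Set E), P (homeomorphUnitSphereProd E x) = F x := by
    rintro ⟨x, hx⟩
    simp [P, smul_smul, norm_ne_zero_iff.2 hx]
  have hP_int : Integrable P (μ.toSphere.prod (.volumeIoiPow (Module.finrank ℝ E - 1))) := by
    rw [← hpolar.integrable_comp_emb hemb, show P ∘ homeomorphUnitSphereProd E = F ∘ (↑) from
      funext hP, ← integrableOn_iff_comap_subtypeVal (measurableSet_singleton _).compl]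
    exact hF.integrableOn
  calc ∫ x, F x ∂μ
      = ∫ x : ({0}ᶜ : Set E), P (homeomorphUnitSphereProd E x) ∂μ.comap (↑) := by
        simp_rw [hP]
        rw [integral_subtype_comap (measurableSet_singleton _).compl fun x => F x,
          restrict_compl_singleton]
    _ = ∫ p, P p ∂μ.toSphere.prod (.volumeIoiPow (Module.finrank ℝ E - 1)) :=
        hpolar.integral_comp hemb P
    _ = _ := by
        rw [integral_prod_symm _ hP_int]
        exact integral_volumeIoiPow _ fun r => ∫ w : sphere (0 : E) 1, F (r • (w : E)) ∂μ.toSphere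

lemma setIntegral_ball_eq_integral_integral_toSphere {F : E → G} {R : ℝ} (hR : 0 ≤ R)
    (hF : IntegrableOn F (ball 0 R) μ) :
    ∫ x in ball 0 R, F x ∂μ = ∫ r in (0 : ℝ)..R, r ^ (Module.finrank ℝ E - 1) •
      ∫ w : sphere (0 : E) 1, F (r • (w : E)) ∂μ.toSphere := by
  have hindicator : ∀ r ∈ Set.Ioi (0 : ℝ), r ^ (Module.finrank ℝ E - 1) •
      ∫ w : sphere (0 : E) 1, (ball 0 R).indicator F (r • (w : E)) ∂μ.toSphere
        = (Set.Iio R).indicator (fun r => r ^ (Module.finrank ℝ E - 1) •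
          ∫ w : sphere (0 : E) 1, F (r • (w : E)) ∂μ.toSphere) r := by
    intro r hr
    have hmem : ∀ w : sphere (0 : E) 1, r • (w : E) ∈ ball 0 R ↔ r ∈ Set.Iio R := fun w => by
      simp [norm_smul, abs_of_pos hr.out]
    by_cases hrR : r ∈ Set.Iio R <;> simp only [Set.indicator, hmem, hrR] <;> simp
  rw [← integral_indicator measurableSet_ball, integral_eq_integral_Ioi_integral_toSphere μ
      ((integrable_indicator_iff measurableSet_ball).2 hF),
    setIntegral_congr_fun measurableSet_Ioi hindicator, setIntegral_indicator measurableSet_Iio,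
    Set.Ioi_inter_Iio, intervalIntegral.integral_of_le hR, integral_Ioc_eq_integral_Ioo]

end PolarCoordinates

section Divergence

variable {N : ℕ}

lemma sum_apply_single_mul (L : EuclideanSpace ℝ (Fin N) →L[ℝ] ℝ) (v : EuclideanSpace ℝ (Fin N)) :
    ∑ i, L (EuclideanSpace.single i 1) * v i = L v := by
  conv_rhs => rw [← (EuclideanSpace.basisFun (Fin N) ℝ).sum_repr v, map_sum]
  simp [mul_comm]

lemma vdiv_fun_sub {F G : EuclideanSpace ℝ (Fin N) → EuclideanSpace ℝ (Fin N)}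
    {x : EuclideanSpace ℝ (Fin N)} (hF : DifferentiableAt ℝ F x) (hG : DifferentiableAt ℝ G x) :
    vdiv (fun y => F y - G y) x = vdiv F x - vdiv G x := by
  simp [vdiv, fderiv_fun_sub hF hG]

lemma vdiv_fun_sum {ι : Type*} {s : Finset ι}
    {F : ι → EuclideanSpace ℝ (Fin N) → EuclideanSpace ℝ (Fin N)} {x : EuclideanSpace ℝ (Fin N)}
    (hF : ∀ i ∈ s, DifferentiableAt ℝ (F i) x) :
    vdiv (fun y => ∑ i ∈ s, F i y) x = ∑ i ∈ s, vdiv (F i) x := by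
  simp [vdiv, fderiv_fun_sum hF, sum_comm (s := s)]

lemma vdiv_fun_smul {g : EuclideanSpace ℝ (Fin N) → ℝ}
    {F : EuclideanSpace ℝ (Fin N) → EuclideanSpace ℝ (Fin N)} {x : EuclideanSpace ℝ (Fin N)}
    (hg : DifferentiableAt ℝ g x) (hF : DifferentiableAt ℝ F x) :
    vdiv (fun y => g y • F y) x = g x * vdiv F x + fderiv ℝ g x (F x) := by
  simp only [vdiv, fderiv_fun_smul hg hF, add_apply, smul_apply,
    ContinuousLinearMap.smulRight_apply, PiLp.add_apply, PiLp.smul_apply, smul_eq_mul,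
    sum_add_distrib, ← mul_sum, sum_apply_single_mul]

lemma continuous_vdiv {F : EuclideanSpace ℝ (Fin N) → EuclideanSpace ℝ (Fin N)}
    (hF : ContDiff ℝ 1 F) : Continuous (vdiv F) := by
  have := hF.continuous_fderiv one_ne_zero
  unfold vdiv
  fun_prop

lemma fderiv_apply_coord {F : EuclideanSpace ℝ (Fin N) → EuclideanSpace ℝ (Fin N)}
    {x : EuclideanSpace ℝ (Fin N)} (hF : DifferentiableAt ℝ F x) (v : EuclideanSpace ℝ (Fin N))
    (i : Fin N) : fderiv ℝ (fun y => F y i) x v = fderiv ℝ F x v i :=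
  congr($((((EuclideanSpace.proj i : EuclideanSpace ℝ (Fin N) →L[ℝ] ℝ).hasFDerivAt.comp x
    hF.hasFDerivAt)).fderiv) v)

lemma integral_mul_vdiv {χ : EuclideanSpace ℝ (Fin N) → ℝ}
    {F : EuclideanSpace ℝ (Fin N) → EuclideanSpace ℝ (Fin N)} (hχ : ContDiff ℝ 1 χ)
    (hsupp : HasCompactSupport χ) (hF : ContDiff ℝ 1 F) :
    ∫ x, χ x * vdiv F x = -∫ x, fderiv ℝ χ x (F x) := by
  have := hχ.continuous_fderiv one_ne_zero
  have := hF.continuous_fderiv one_ne_zero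
  have hχF' (i : Fin N) :
      Integrable fun x => χ x * fderiv ℝ F x (EuclideanSpace.single i 1) i :=
    Continuous.integrable_of_hasCompactSupport (by fun_prop) hsupp.mul_right
  have hχ'F (i : Fin N) :
      Integrable fun x => fderiv ℝ χ x (EuclideanSpace.single i 1) * F x i :=
    Continuous.integrable_of_hasCompactSupport (by fun_prop) (hsupp.fderiv_apply ℝ _).mul_right
  have hχF (i : Fin N) : Integrable fun x => χ x * F x i :=
    Continuous.integrable_of_hasCompactSupport (by fun_prop) hsupp.mul_right
  simp_rw [vdiv, mul_sum, ← sum_apply_single_mul (fderiv ℝ χ _) (F _)]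
  rw [integral_finsetSum _ fun i _ => hχF' i, integral_finsetSum _ fun i _ => hχ'F i,
    ← sum_neg_distrib]
  refine sum_congr rfl fun i _ => ?_
  have hcoord : Differentiable ℝ fun x => F x i :=
    (contDiff_euclidean.1 hF i).differentiable one_ne_zero
  have hχF'i := hχF' i
  simp_rw [← fderiv_apply_coord (hF.differentiable one_ne_zero _)] at hχF'i ⊢
  exact integral_mul_fderiv_eq_neg_fderiv_mul_of_integrable (hχ'F i) hχF'i (hχF i)
    (fun x _ => hχ.differentiable one_ne_zero x) fun x _ => hcoord x

lemma hasDerivAt_max_zero_sq (t : ℝ) : HasDerivAt (fun s : ℝ => max s 0 ^ 2) (2 * max t 0) t := by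
  rcases lt_trichotomy t 0 with ht | rfl | ht
  · rw [max_eq_right ht.le, mul_zero]
    refine (hasDerivAt_const t 0).congr_of_eventuallyEq ?_
    filter_upwards [Iio_mem_nhds ht] with s hs
    rw [max_eq_right (Set.mem_Iio.1 hs).le, zero_pow two_ne_zero]
  · have hO : (fun s : ℝ => max s 0 ^ 2) =O[nhds 0] fun s => ‖s - 0‖ ^ 2 :=
      Asymptotics.IsBigO.of_norm_le fun s => by
        simpa using pow_le_pow_left₀ (le_max_right s 0) (max_le (le_abs_self s) (abs_nonneg s)) 2
    simpa using (hO.hasFDerivAt one_lt_two).hasDerivAt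
  · rw [max_eq_left ht.le]
    have hpow : HasDerivAt (fun s : ℝ => s ^ 2) (2 * t) t := by simpa using hasDerivAt_pow 2 t
    refine hpow.congr_of_eventuallyEq ?_
    filter_upwards [Ioi_mem_nhds ht] with s hs
    rw [max_eq_left (Set.mem_Ioi.1 hs).le]

lemma contDiff_max_zero_sq : ContDiff ℝ 1 fun t : ℝ => max t 0 ^ 2 := by
  rw [contDiff_one_iff_deriv]
  refine ⟨fun t => (hasDerivAt_max_zero_sq t).differentiableAt, ?_⟩
  simp_rw [funext fun t => (hasDerivAt_max_zero_sq t).deriv]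
  fun_prop

lemma setIntegral_ball_sq_mul_vdiv {F : EuclideanSpace ℝ (Fin N) → EuclideanSpace ℝ (Fin N)}
    (hF : ContDiff ℝ 1 F) {R : ℝ} (hR : 0 < R) :
    ∫ x in ball (0 : EuclideanSpace ℝ (Fin N)) R, (R ^ 2 - ‖x‖ ^ 2) ^ 2 * vdiv F x
      = ∫ x in ball (0 : EuclideanSpace ℝ (Fin N)) R, 4 * (R ^ 2 - ‖x‖ ^ 2) * ⟪F x, x⟫ := by
  set χ : EuclideanSpace ℝ (Fin N) → ℝ := fun x => max (R ^ 2 - ‖x‖ ^ 2) 0 ^ 2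
  have hχ : ContDiff ℝ 1 χ := contDiff_max_zero_sq.comp (contDiff_const.sub (contDiff_norm_sq ℝ))
  have houtside {x : EuclideanSpace ℝ (Fin N)} (hx : x ∉ ball 0 R) :
      max (R ^ 2 - ‖x‖ ^ 2) 0 = 0 := by
    rw [mem_ball_zero_iff, not_lt] at hx
    exact max_eq_right (by nlinarith)
  have hinside {x : EuclideanSpace ℝ (Fin N)} (hx : x ∈ ball 0 R) :
      max (R ^ 2 - ‖x‖ ^ 2) 0 = R ^ 2 - ‖x‖ ^ 2 := by
    rw [mem_ball_zero_iff] at hx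
    exact max_eq_left (by nlinarith [norm_nonneg x])
  have hsupp : HasCompactSupport χ :=
    HasCompactSupport.intro (isCompact_closedBall 0 R) fun x hx => by
      simp [χ, houtside fun h => hx (ball_subset_closedBall h)]
  have hχ' (x v) : fderiv ℝ χ x v = -(4 * max (R ^ 2 - ‖x‖ ^ 2) 0 * ⟪v, x⟫) := by
    have hderiv : HasFDerivAt χ _ x := (hasDerivAt_max_zero_sq _).comp_hasFDerivAt x
      ((hasStrictFDerivAt_norm_sq x).hasFDerivAt.const_sub (R ^ 2))
    rw [hderiv.fderiv]
    simp only [smul_neg, neg_apply, smul_apply, coe_innerSL_apply, nsmul_eq_mul, Nat.cast_ofNat,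
      smul_eq_mul, real_inner_comm, neg_inj]
    ring
  calc ∫ x in ball 0 R, (R ^ 2 - ‖x‖ ^ 2) ^ 2 * vdiv F x
      = ∫ x in ball 0 R, χ x * vdiv F x :=
        setIntegral_congr_fun measurableSet_ball fun x hx => by simp only [χ, hinside hx]
    _ = ∫ x, χ x * vdiv F x :=
        setIntegral_eq_integral_of_forall_compl_eq_zero fun x hx => by simp [χ, houtside hx]
    _ = ∫ x, 4 * max (R ^ 2 - ‖x‖ ^ 2) 0 * ⟪F x, x⟫ := by
        simp_rw [integral_mul_vdiv hχ hsupp hF, hχ', integral_neg, neg_neg]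
    _ = ∫ x in ball 0 R, 4 * max (R ^ 2 - ‖x‖ ^ 2) 0 * ⟪F x, x⟫ :=
        (setIntegral_eq_integral_of_forall_compl_eq_zero fun x hx => by simp [houtside hx]).symm
    _ = ∫ x in ball 0 R, 4 * (R ^ 2 - ‖x‖ ^ 2) * ⟪F x, x⟫ :=
        setIntegral_congr_fun measurableSet_ball fun x hx => by simp only [hinside hx]

end Divergence

section BallDivergence

lemma eq_zero_of_forall_integral_sq_sub_sq_mul_eq_zero {W : ℝ → ℝ} (hW : Continuous W)
    (h : ∀ R > 0, ∫ r in (0 : ℝ)..R, (R ^ 2 - r ^ 2) * W r = 0) {R : ℝ} (hR : 0 < R) :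
    W R = 0 := by
  set P : ℝ → ℝ := fun x => ∫ r in (0 : ℝ)..x, W r
  set Q : ℝ → ℝ := fun x => ∫ r in (0 : ℝ)..x, r ^ 2 * W r
  have hP (x) : HasDerivAt P (W x) x := hW.integral_hasStrictDerivAt 0 x |>.hasDerivAt
  have hQ (x) : HasDerivAt Q (x ^ 2 * W x) x :=
    (by fun_prop : Continuous fun r : ℝ => r ^ 2 * W r).integral_hasStrictDerivAt 0 x |>.hasDerivAt
  have hPQ : ∀ x ∈ Set.Ioi (0 : ℝ), x ^ 2 * P x - Q x = 0 := fun x hx => by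
    rw [← h x hx, ← intervalIntegral.integral_const_mul, ← intervalIntegral.integral_sub]
    · simp_rw [sub_mul]
    all_goals exact Continuous.intervalIntegrable (by fun_prop) _ _
  have hP0 : ∀ x ∈ Set.Ioi (0 : ℝ), P x = 0 := fun x hx => by
    have hd := ((hasDerivAt_pow 2 x).mul (hP x)).sub (hQ x)
    have h0 := hd.unique <| (hasDerivAt_const x (0 : ℝ)).congr_of_eventuallyEq <|
      Set.EqOn.eventuallyEq_of_mem hPQ (Ioi_mem_nhds hx)
    have : 2 * x * P x = 0 := by simpa using h0
    simpa [(Set.mem_Ioi.1 hx).ne'] using this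
  exact (hP R).unique <| (hasDerivAt_const R (0 : ℝ)).congr_of_eventuallyEq <|
    Set.EqOn.eventuallyEq_of_mem hP0 (Ioi_mem_nhds hR)

lemma integral_eq_of_forall_integral_sq_sub_sq_sq_mul_eq {A B : ℝ → ℝ} (hA : Continuous A)
    (hB : Continuous B)
    (h : ∀ R > 0, ∫ r in (0 : ℝ)..R, (R ^ 2 - r ^ 2) ^ 2 * B r
      = ∫ r in (0 : ℝ)..R, 4 * (R ^ 2 - r ^ 2) * (r * A r)) {R : ℝ} (hR : 0 < R) :
    ∫ r in (0 : ℝ)..R, B r = A R := by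
  set V : ℝ → ℝ := fun x => ∫ r in (0 : ℝ)..x, B r
  have hV (x) : HasDerivAt V (B x) x := hB.integral_hasStrictDerivAt 0 x |>.hasDerivAt
  have hVc : Continuous V := continuous_iff_continuousAt.2 fun x => (hV x).continuousAt
  have hparts (ρ : ℝ) : ∫ r in (0 : ℝ)..ρ, (ρ ^ 2 - r ^ 2) ^ 2 * B r
      = ∫ r in (0 : ℝ)..ρ, 4 * (ρ ^ 2 - r ^ 2) * (r * V r) := by
    have hw (r) : HasDerivAt (fun r : ℝ => (ρ ^ 2 - r ^ 2) ^ 2) (-(4 * (ρ ^ 2 - r ^ 2) * r)) r := by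
      refine (((hasDerivAt_pow 2 r).const_sub (ρ ^ 2)).pow 2).congr_deriv ?_
      norm_num
      ring
    rw [intervalIntegral.integral_mul_deriv_eq_deriv_mul (fun r _ => hw r) (fun r _ => hV r)
      (Continuous.intervalIntegrable (by fun_prop) _ _) (hB.intervalIntegrable _ _)]
    simp [V, ← intervalIntegral.integral_neg, mul_assoc]
  have hW : 4 * (R * (V R - A R)) = 0 :=
    eq_zero_of_forall_integral_sq_sub_sq_mul_eq_zero (W := fun r => 4 * (r * (V r - A r)))
      (by fun_prop) (fun ρ hρ => by
        have hsub := sub_eq_zero.2 ((hparts ρ).symm.trans (h ρ hρ))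
        rw [← intervalIntegral.integral_sub
          (Continuous.intervalIntegrable (by fun_prop) _ _)
          (Continuous.intervalIntegrable (by fun_prop) _ _)] at hsub
        rw [← hsub]
        congr with r
        ring) hR
  simpa [hR.ne', sub_eq_zero] using hW

lemma setIntegral_ball_vdiv_eq_integral_toSphere {k : ℕ}
    {F : EuclideanSpace ℝ (Fin (k + 1)) → EuclideanSpace ℝ (Fin (k + 1))} (hF : ContDiff ℝ 1 F)
    {R : ℝ} (hR : 0 < R) :
    ∫ x in ball (0 : EuclideanSpace ℝ (Fin (k + 1))) R, vdiv F x
      = R ^ k * ∫ w : sphere (0 : EuclideanSpace ℝ (Fin (k + 1))) 1,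
          ⟪F (R • (w : EuclideanSpace ℝ (Fin (k + 1)))), w⟫
          ∂(volume : Measure (EuclideanSpace ℝ (Fin (k + 1)))).toSphere := by
  have hFc := hF.continuous
  have hdiv := continuous_vdiv hF
  have hpolar {g : EuclideanSpace ℝ (Fin (k + 1)) → ℝ} (hg : Continuous g) {ρ : ℝ} (hρ : 0 < ρ) :=
    setIntegral_ball_eq_integral_integral_toSphere volume hρ.le
      ((hg.locallyIntegrable.integrableOn_isCompact (isCompact_closedBall _ _)).mono_set
        ball_subset_closedBall)
  simp only [finrank_euclideanSpace, Fintype.card_fin, add_tsub_cancel_right, smul_eq_mul] at hpolar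
  have hmean {g : ℝ → sphere (0 : EuclideanSpace ℝ (Fin (k + 1))) 1 → ℝ}
      (hg : Continuous (Function.uncurry g)) : Continuous fun r : ℝ => r ^ k *
        ∫ w, g r w ∂(volume : Measure (EuclideanSpace ℝ (Fin (k + 1)))).toSphere := by
    have := continuous_parametric_integral_of_continuous hg isCompact_univ
      (μ := (volume : Measure (EuclideanSpace ℝ (Fin (k + 1)))).toSphere)
    rw [Measure.restrict_univ] at this
    fun_prop
  rw [hpolar hdiv hR]
  refine integral_eq_of_forall_integral_sq_sub_sq_sq_mul_eq
    (hmean (g := fun r w => ⟪F (r • (w : EuclideanSpace ℝ (Fin (k + 1)))), w⟫) (by fun_prop))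
    (hmean (g := fun r w => vdiv F (r • (w : EuclideanSpace ℝ (Fin (k + 1))))) (by fun_prop))
    (fun ρ hρ => ?_) hR
  have hweight := setIntegral_ball_sq_mul_vdiv hF hρ
  rw [hpolar (by fun_prop) hρ, hpolar (by fun_prop) hρ] at hweight
  simp_rw [norm_smul, norm_eq_of_mem_sphere, mul_one, Real.norm_eq_abs, sq_abs,
    real_inner_smul_right, integral_const_mul] at hweight
  convert hweight using 3 <;> ring

theorem exists_setIntegral_ball_vdiv_eq_mul_setIntegral_sphere (n : ℕ) :
    ∃ c : ℝ, ∀ F : EuclideanSpace ℝ (Fin n) → EuclideanSpace ℝ (Fin n), ContDiff ℝ 1 F →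
      ∀ R : ℝ, 0 < R → ∫ x in ball (0 : EuclideanSpace ℝ (Fin n)) R, vdiv F x
        = c * ∫ x in sphere (0 : EuclideanSpace ℝ (Fin n)) R, ⟪F x, ‖x‖⁻¹ • x⟫
            ∂μH[(n : ℝ) - 1] := by
  obtain _ | k := n
  · exact ⟨0, by simp [vdiv]⟩
  have : Fact (Module.finrank ℝ (EuclideanSpace ℝ (Fin (k + 1))) = k + 1) :=
    ⟨finrank_euclideanSpace_fin⟩
  obtain ⟨c, hc⟩ := exists_integral_toSphere_eq_setIntegral_sphere
    (E := EuclideanSpace ℝ (Fin (k + 1))) (k := k)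
  refine ⟨c, fun F hF R hR => ?_⟩
  rw [setIntegral_ball_vdiv_eq_integral_toSphere hF hR, Nat.cast_succ, add_sub_cancel_right,
    ← hc _ R hR]
  congr 2 with w
  simp [norm_smul, abs_of_pos hR, smul_smul, hR.ne']

end BallDivergence

section ConservationLaw

/-- The projection `(x', t) ↦ x'` of `ℝⁿ⁺¹` onto its first `n` coordinates. -/
def horizontalProj (n : ℕ) : EuclideanSpace ℝ (Fin (n + 1)) →L[ℝ] EuclideanSpace ℝ (Fin n) :=
  LinearMap.toContinuousLinearMap
    { toFun := fun y => WithLp.toLp 2 fun j => y j.castSucc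
      map_add' := fun _ _ => rfl
      map_smul' := fun _ _ => rfl }

variable {n : ℕ}

lemma horizontalProj_apply (y : EuclideanSpace ℝ (Fin (n + 1))) (j : Fin n) :
    horizontalProj n y j = y j.castSucc := rfl

lemma horizontalProj_single_last :
    horizontalProj n (EuclideanSpace.single (Fin.last n) 1) = 0 := by
  ext j
  simp [horizontalProj_apply, Fin.castSucc_ne_last]

lemma adjoint_horizontalProj_single (j : Fin n) :
    (horizontalProj n).adjoint (EuclideanSpace.single j 1)
      = EuclideanSpace.single j.castSucc 1 := by
  refine ext_inner_right ℝ fun z => ?_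
  simp [ContinuousLinearMap.adjoint_inner_left, EuclideanSpace.inner_single_left,
    horizontalProj_apply]

lemma emb_eq (x : EuclideanSpace ℝ (Fin n)) (t : ℝ) :
    emb x t = (horizontalProj n).adjoint x + t • EuclideanSpace.single (Fin.last n) 1 := by
  refine ext_inner_right ℝ fun z => ?_
  rw [inner_add_left, ContinuousLinearMap.adjoint_inner_left, real_inner_smul_left,
    EuclideanSpace.inner_single_left, PiLp.inner_apply, PiLp.inner_apply, Fin.sum_univ_castSucc]
  simp [emb, horizontalProj_apply, mul_comm]

lemma hasFDerivAt_emb (x : EuclideanSpace ℝ (Fin n)) (t : ℝ) :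
    HasFDerivAt (fun y => emb y t) (horizontalProj n).adjoint x := by
  simp_rw [emb_eq]
  exact (horizontalProj n).adjoint.hasFDerivAt.add_const _

lemma hasDerivAt_emb (x : EuclideanSpace ℝ (Fin n)) (t : ℝ) :
    HasDerivAt (emb x) (EuclideanSpace.single (Fin.last n) 1) t := by
  rw [funext (emb_eq x)]
  simpa using ((hasDerivAt_id t).smul_const (EuclideanSpace.single (Fin.last n) (1 : ℝ))).const_add
    ((horizontalProj n).adjoint x)

lemma contDiff_emb {k : WithTop ℕ∞} :
    ContDiff ℝ k fun p : EuclideanSpace ℝ (Fin n) × ℝ => emb p.1 p.2 := by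
  simp_rw [emb_eq]
  fun_prop

lemma gradient_comp_emb {v : EuclideanSpace ℝ (Fin (n + 1)) → ℝ} {x : EuclideanSpace ℝ (Fin n)}
    {t : ℝ} (hv : DifferentiableAt ℝ v (emb x t)) :
    gradient (fun y => v (emb y t)) x = horizontalProj n (gradient v (emb x t)) := by
  have hslice : HasFDerivAt (fun y => v (emb y t)) _ x :=
    hv.hasFDerivAt.comp x (hasFDerivAt_emb x t)
  refine ext_inner_right ℝ fun w => ?_
  rw [inner_gradient_left, hslice.fderiv, ContinuousLinearMap.comp_apply, ← inner_gradient_left,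
    ContinuousLinearMap.adjoint_inner_right]

lemma vdiv_emb {F : EuclideanSpace ℝ (Fin (n + 1)) → EuclideanSpace ℝ (Fin (n + 1))}
    {x : EuclideanSpace ℝ (Fin n)} {t : ℝ} (hF : DifferentiableAt ℝ F (emb x t)) :
    vdiv F (emb x t) = vdiv (fun y => horizontalProj n (F (emb y t))) x
      + fderiv ℝ F (emb x t) (EuclideanSpace.single (Fin.last n) 1) (Fin.last n) := by
  have hslice : HasFDerivAt (fun y => horizontalProj n (F (emb y t))) _ x :=
    (horizontalProj n).hasFDerivAt.comp x (hF.hasFDerivAt.comp x (hasFDerivAt_emb x t))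
  simp [vdiv, hslice.fderiv, Fin.sum_univ_castSucc, horizontalProj_apply,
    adjoint_horizontalProj_single]

lemma setIntegral_sub_setIntegral_eq_integral_setIntegral {X : Type*} [TopologicalSpace X]
    [T2Space X] [SecondCountableTopology X] [MeasurableSpace X] [BorelSpace X] {μ : Measure X}
    [SFinite μ] [IsFiniteMeasureOnCompacts μ] {S K : Set X} (hK : IsCompact K) (hSK : S ⊆ K)
    {h h' : ℝ → X → ℝ} (hh : ∀ s, Continuous (h s)) (hh' : Continuous (Function.uncurry h'))
    (hderiv : ∀ s x, HasDerivAt (h · x) (h' s x) s) (a b : ℝ) :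
    (∫ x in S, h b x ∂μ) - (∫ x in S, h a x ∂μ) = ∫ s in a..b, ∫ x in S, h' s x ∂μ := by
  have hh_int (s : ℝ) : IntegrableOn (h s) S μ :=
    ((hh s).continuousOn.integrableOn_compact hK).mono_set hSK
  have hh'_int : Integrable (Function.uncurry h')
      ((volume.restrict (Set.uIoc a b)).prod (μ.restrict S)) := by
    rw [Measure.prod_restrict]
    exact (hh'.continuousOn.integrableOn_compact (isCompact_uIcc.prod hK)).mono_set
      (Set.prod_mono Set.uIoc_subset_uIcc hSK)
  rw [← integral_sub (hh_int b) (hh_int a), intervalIntegral_integral_swap hh'_int]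
  congr with x
  exact (intervalIntegral.integral_eq_sub_of_hasDerivAt (fun s _ => hderiv s x)
    (Continuous.intervalIntegrable (by fun_prop) _ _)).symm

lemma exists_forall_vdiv_eq_zero_setIntegral_ball_last_sub_eq (n : ℕ) :
    ∃ c : ℝ, ∀ F : EuclideanSpace ℝ (Fin (n + 1)) → EuclideanSpace ℝ (Fin (n + 1)),
      ContDiff ℝ 1 F → (∀ y, vdiv F y = 0) → ∀ a b r : ℝ, 0 < r →
      (∫ x in ball (0 : EuclideanSpace ℝ (Fin n)) r, F (emb x b) (Fin.last n))
        - (∫ x in ball (0 : EuclideanSpace ℝ (Fin n)) r, F (emb x a) (Fin.last n))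
      = c * ∫ s in a..b, ∫ x in sphere (0 : EuclideanSpace ℝ (Fin n)) r,
          ⟪horizontalProj n (F (emb x s)), ‖x‖⁻¹ • x⟫ ∂μH[(n : ℝ) - 1] := by
  obtain ⟨c, hc⟩ := exists_setIntegral_ball_vdiv_eq_mul_setIntegral_sphere n
  refine ⟨-c, fun F hF hdiv a b r hr => ?_⟩
  have hFd := hF.differentiable one_ne_zero
  have hemb := contDiff_emb (n := n) (k := 1)
  have hderiv (s : ℝ) (x : EuclideanSpace ℝ (Fin n)) :
      HasDerivAt (fun s => F (emb x s) (Fin.last n))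
        (fderiv ℝ F (emb x s) (EuclideanSpace.single (Fin.last n) 1) (Fin.last n)) s :=
    (EuclideanSpace.proj (𝕜 := ℝ) (Fin.last n)).hasFDerivAt.comp_hasDerivAt s
      ((hFd _).hasFDerivAt.comp_hasDerivAt s (hasDerivAt_emb x s))
  have hslice (s : ℝ) : ContDiff ℝ 1 fun x : EuclideanSpace ℝ (Fin n) => F (emb x s) :=
    hF.comp (hemb.comp (contDiff_id.prodMk contDiff_const))
  have hlast (s : ℝ) :
      Continuous fun x : EuclideanSpace ℝ (Fin n) => F (emb x s) (Fin.last n) := by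
    have := (hslice s).continuous
    fun_prop
  have hcont : Continuous (Function.uncurry fun s (x : EuclideanSpace ℝ (Fin n)) =>
      fderiv ℝ F (emb x s) (EuclideanSpace.single (Fin.last n) 1) (Fin.last n)) := by
    have : Continuous fun p : ℝ × EuclideanSpace ℝ (Fin n) => fderiv ℝ F (emb p.2 p.1) :=
      (hF.continuous_fderiv one_ne_zero).comp (hemb.continuous.comp continuous_swap)
    unfold Function.uncurry
    fun_prop
  have hvdiv (s : ℝ) (x : EuclideanSpace ℝ (Fin n)) :
      fderiv ℝ F (emb x s) (EuclideanSpace.single (Fin.last n) 1) (Fin.last n)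
        = -vdiv (fun y => horizontalProj n (F (emb y s))) x :=
    eq_neg_of_add_eq_zero_right ((vdiv_emb (hFd _)).symm.trans (hdiv _))
  rw [setIntegral_sub_setIntegral_eq_integral_setIntegral (isCompact_closedBall 0 r)
    ball_subset_closedBall hlast hcont hderiv, ← intervalIntegral.integral_const_mul]
  refine intervalIntegral.integral_congr fun s _ => ?_
  simp only [hvdiv, integral_neg, neg_mul]
  exact congr(-$(hc _ ((horizontalProj n).contDiff.comp (hslice s)) r hr))

theorem integral_last_emb_eq_of_vdiv_eq_zero
    {F : EuclideanSpace ℝ (Fin (n + 1)) → EuclideanSpace ℝ (Fin (n + 1))} (hF : ContDiff ℝ 1 F)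
    (hdiv : ∀ y, vdiv F y = 0) {a b : ℝ}
    (ha : Integrable fun x : EuclideanSpace ℝ (Fin n) => F (emb x a) (Fin.last n))
    (hb : Integrable fun x : EuclideanSpace ℝ (Fin n) => F (emb x b) (Fin.last n))
    {R : ℕ → ℝ} (hR : Tendsto R atTop atTop)
    (hbdry : Tendsto (fun k => ∫ s in a..b, ∫ x in sphere (0 : EuclideanSpace ℝ (Fin n)) (R k),
      ⟪horizontalProj n (F (emb x s)), ‖x‖⁻¹ • x⟫ ∂μH[(n : ℝ) - 1]) atTop (nhds 0)) :
    ∫ x : EuclideanSpace ℝ (Fin n), F (emb x b) (Fin.last n)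
      = ∫ x : EuclideanSpace ℝ (Fin n), F (emb x a) (Fin.last n) := by
  obtain ⟨c, hc⟩ := exists_forall_vdiv_eq_zero_setIntegral_ball_last_sub_eq n
  have hexhaust {t : ℝ}
      (ht : Integrable fun x : EuclideanSpace ℝ (Fin n) => F (emb x t) (Fin.last n)) :=
    (aecover_ball (x := 0) hR).integral_tendsto_of_countably_generated ht
  refine sub_eq_zero.1 (tendsto_nhds_unique ((hexhaust hb).sub (hexhaust ha)) ?_)
  rw [← mul_zero c]
  refine (hbdry.const_mul c).congr' ?_
  filter_upwards [hR.eventually_gt_atTop 0] with k hk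
  exact (hc F hF hdiv a b (R k) hk).symm

end ConservationLaw

section DirectionalDerivative

variable {E : Type*} [NormedAddCommGroup E] [NormedSpace ℝ E]

lemma contDiff_fderiv_apply {k : WithTop ℕ∞} {v : E → ℝ} (hv : ContDiff ℝ (k + 1) v) (e : E) :
    ContDiff ℝ k fun y => fderiv ℝ v y e :=
  (hv.fderiv_right le_rfl).clm_apply contDiff_const

lemma fderiv_comp_norm_sq {F : Type*} [NormedAddCommGroup F] [InnerProductSpace ℝ F]
    {Φ : ℝ → ℝ} (hΦ : Differentiable ℝ Φ) {X : E → F} {x : E}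
    (hX : DifferentiableAt ℝ X x) (e : E) :
    fderiv ℝ (fun y => Φ (‖X y‖ ^ 2)) x e
      = 2 * deriv Φ (‖X x‖ ^ 2) * ⟪fderiv ℝ X x e, X x⟫ := by
  have hderiv : HasFDerivAt (fun y => Φ (‖X y‖ ^ 2)) _ x :=
    (hΦ _).hasDerivAt.comp_hasFDerivAt x hX.hasFDerivAt.norm_sq
  rw [hderiv.fderiv]
  simp only [smul_apply, ContinuousLinearMap.comp_apply, coe_innerSL_apply, nsmul_eq_mul,
    Nat.cast_ofNat, smul_eq_mul, real_inner_comm]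
  ring

lemma fderiv_comp_pi {ι : Type*} [Fintype ι] [DecidableEq ι] {g : (ι → ℝ) → ℝ}
    (hg : Differentiable ℝ g) {u : ι → E → ℝ} {x : E} (hu : ∀ i, DifferentiableAt ℝ (u i) x)
    (e : E) :
    fderiv ℝ (fun y => g fun j => u j y) x e
      = ∑ i, fderiv ℝ (u i) x e * fderiv ℝ g (fun j => u j x) (Pi.single i 1) := by
  have hderiv : HasFDerivAt (fun y => g fun j => u j y) _ x :=
    (hg _).hasFDerivAt.comp x (hasFDerivAt_pi.2 fun i => (hu i).hasFDerivAt)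
  rw [hderiv.fderiv, ContinuousLinearMap.comp_apply, pi_eq_sum_univ' (ContinuousLinearMap.pi _ e)]
  simp

end DirectionalDerivative

section Gradient

variable {E : Type*} [NormedAddCommGroup E] [InnerProductSpace ℝ E] [CompleteSpace E] {v : E → ℝ}

lemma contDiff_gradient {k : WithTop ℕ∞} (hv : ContDiff ℝ (k + 1) v) :
    ContDiff ℝ k (gradient v) :=
  (InnerProductSpace.toDual ℝ E).symm.contDiff.comp (hv.fderiv_right le_rfl)

lemma inner_fderiv_gradient {x : E} (hv : DifferentiableAt ℝ (fderiv ℝ v) x) (e w : E) :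
    ⟪fderiv ℝ (gradient v) x e, w⟫ = fderiv ℝ (fderiv ℝ v) x e w := by
  have hgrad : HasFDerivAt (gradient v) _ x :=
    (InnerProductSpace.toDual ℝ E).symm.toContinuousLinearEquiv.hasFDerivAt.comp x hv.hasFDerivAt
  rw [hgrad.fderiv]
  exact InnerProductSpace.toDual_symm_apply

lemma fderiv_fderiv_apply {x : E} (hv : ContDiffAt ℝ 2 v x) (e w : E) :
    fderiv ℝ (fun y => fderiv ℝ v y e) x w = ⟪fderiv ℝ (gradient v) x e, w⟫ := by
  have hv' : DifferentiableAt ℝ (fderiv ℝ v) x :=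
    (hv.fderiv_right (m := 1) le_rfl).differentiableAt one_ne_zero
  rw [inner_fderiv_gradient hv', (hv.isSymmSndFDerivAt (by simp)).eq, fderiv_clm_apply hv'
    (differentiableAt_const e)]
  simp

end Gradient

section NoetherCurrent

variable {N m : ℕ}

/-- The Noether current of the translations in direction `e` for the Lagrangian
`∑ᵢ (1/2)Φ(|∇uᵢ|²) - H̃(u)`. -/
def noetherCurrent (Φ : ℝ → ℝ) (Ht : (Fin m → ℝ) → ℝ) (u : Fin m → EuclideanSpace ℝ (Fin N) → ℝ)
    (e y : EuclideanSpace ℝ (Fin N)) : EuclideanSpace ℝ (Fin N) :=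
  ((∑ i, 1 / 2 * Φ (‖gradient (u i) y‖ ^ 2)) - Ht fun j => u j y) • e
    - ∑ i, fderiv ℝ (u i) y e • deriv Φ (‖gradient (u i) y‖ ^ 2) • gradient (u i) y

lemma contDiff_comp_norm_gradient_sq {Φ : ℝ → ℝ} (hΦ : ContDiff ℝ 1 Φ)
    {v : EuclideanSpace ℝ (Fin N) → ℝ} (hv : ContDiff ℝ 2 v) :
    ContDiff ℝ 1 fun y => Φ (‖gradient v y‖ ^ 2) :=
  hΦ.comp ((contDiff_gradient hv).norm_sq ℝ)

lemma contDiff_deriv_norm_gradient_sq_smul {Φ : ℝ → ℝ} (hΦ : ContDiff ℝ 2 Φ)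
    {v : EuclideanSpace ℝ (Fin N) → ℝ} (hv : ContDiff ℝ 2 v) :
    ContDiff ℝ 1 fun y => deriv Φ (‖gradient v y‖ ^ 2) • gradient v y :=
  (contDiff_comp_norm_gradient_sq hΦ.deriv' hv).smul (contDiff_gradient hv)

lemma contDiff_fderiv_smul_deriv_norm_gradient_sq_smul {Φ : ℝ → ℝ} (hΦ : ContDiff ℝ 2 Φ)
    {v : EuclideanSpace ℝ (Fin N) → ℝ} (hv : ContDiff ℝ 2 v) (e : EuclideanSpace ℝ (Fin N)) :
    ContDiff ℝ 1 fun y => fderiv ℝ v y e • deriv Φ (‖gradient v y‖ ^ 2) • gradient v y :=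
  (contDiff_fderiv_apply hv e).smul (contDiff_deriv_norm_gradient_sq_smul hΦ hv)

lemma vdiv_fderiv_smul_deriv_norm_gradient_sq_smul {Φ : ℝ → ℝ} (hΦ : ContDiff ℝ 2 Φ)
    {v : EuclideanSpace ℝ (Fin N) → ℝ} (hv : ContDiff ℝ 2 v) (e x : EuclideanSpace ℝ (Fin N)) :
    vdiv (fun y => fderiv ℝ v y e • deriv Φ (‖gradient v y‖ ^ 2) • gradient v y) x
      = fderiv ℝ v x e * vdiv (fun y => deriv Φ (‖gradient v y‖ ^ 2) • gradient v y) x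
        + fderiv ℝ (fun y => 1 / 2 * Φ (‖gradient v y‖ ^ 2)) x e := by
  have hgrad : ContDiff ℝ 1 (gradient v) := contDiff_gradient hv
  have hflux := contDiff_deriv_norm_gradient_sq_smul hΦ hv
  have hlagr := contDiff_comp_norm_gradient_sq (hΦ.of_le one_le_two) hv
  rw [vdiv_fun_smul ((contDiff_fderiv_apply hv e).differentiable one_ne_zero x)
      (hflux.differentiable one_ne_zero x), fderiv_fderiv_apply hv.contDiffAt, inner_smul_right,
    fderiv_const_mul (hlagr.differentiable one_ne_zero x), smul_apply,
    fderiv_comp_norm_sq (hΦ.differentiable two_ne_zero) (hgrad.differentiable one_ne_zero x),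
    smul_eq_mul]
  ring

section System

variable {Φ : ℝ → ℝ} (hΦ : ContDiff ℝ 2 Φ) {Ht : (Fin m → ℝ) → ℝ} (hHt : ContDiff ℝ 1 Ht)
  {u : Fin m → EuclideanSpace ℝ (Fin N) → ℝ} (hu : ∀ i, ContDiff ℝ 2 (u i))
include hΦ hHt hu

lemma contDiff_noetherCurrent (e : EuclideanSpace ℝ (Fin N)) :
    ContDiff ℝ 1 (noetherCurrent Φ Ht u e) := by
  have hlagr (i : Fin m) : ContDiff ℝ 1 fun y => 1 / 2 * Φ (‖gradient (u i) y‖ ^ 2) :=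
    contDiff_const.mul (contDiff_comp_norm_gradient_sq (hΦ.of_le one_le_two) (hu i))
  have hpot : ContDiff ℝ 1 fun y => Ht fun j => u j y :=
    hHt.comp (contDiff_pi.2 fun j => (hu j).of_le one_le_two)
  exact (((ContDiff.sum fun i _ => hlagr i).sub hpot).smul contDiff_const).sub
    (ContDiff.sum fun i _ => contDiff_fderiv_smul_deriv_norm_gradient_sq_smul hΦ (hu i) e)

theorem vdiv_noetherCurrent (e x : EuclideanSpace ℝ (Fin N)) :
    vdiv (noetherCurrent Φ Ht u e) x
      = -∑ i, fderiv ℝ (u i) x e *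
          (vdiv (fun y => deriv Φ (‖gradient (u i) y‖ ^ 2) • gradient (u i) y) x
            + fderiv ℝ Ht (fun j => u j x) (Pi.single i 1)) := by
  have hlagr (i : Fin m) : DifferentiableAt ℝ (fun y => 1 / 2 * Φ (‖gradient (u i) y‖ ^ 2)) x :=
    (contDiff_const.mul (contDiff_comp_norm_gradient_sq (hΦ.of_le one_le_two)
      (hu i))).differentiable one_ne_zero x
  have hlagr_sum := DifferentiableAt.fun_sum fun i (_ : i ∈ Finset.univ) => hlagr i
  have hu' (i : Fin m) : DifferentiableAt ℝ (u i) x := (hu i).differentiable two_ne_zero x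
  have hpot : DifferentiableAt ℝ (fun y => Ht fun j => u j y) x :=
    (hHt.differentiable one_ne_zero _).comp x (differentiableAt_pi.2 hu')
  have hflux (i : Fin m) := (contDiff_fderiv_smul_deriv_norm_gradient_sq_smul hΦ (hu i)
    e).differentiable one_ne_zero x
  have hvdiv_const : vdiv (fun _ => e) x = 0 := by simp [vdiv]
  unfold noetherCurrent
  rw [vdiv_fun_sub ((hlagr_sum.fun_sub hpot).smul_const e)
      (DifferentiableAt.fun_sum fun i _ => hflux i),
    vdiv_fun_smul (hlagr_sum.fun_sub hpot) (differentiableAt_const e), hvdiv_const,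
    fderiv_fun_sub hlagr_sum hpot, sub_apply, fderiv_fun_sum fun i _ => hlagr i, _root_.sum_apply,
    fderiv_comp_pi (hHt.differentiable one_ne_zero) hu', vdiv_fun_sum fun i _ => hflux i]
  simp_rw [vdiv_fderiv_smul_deriv_norm_gradient_sq_smul hΦ (hu _), mul_add, sum_add_distrib]
  ring

end System

variable {n : ℕ}

lemma noetherCurrent_single_last_apply_last (Φ : ℝ → ℝ) (Ht : (Fin m → ℝ) → ℝ)
    (u : Fin m → EuclideanSpace ℝ (Fin (n + 1)) → ℝ) (x : EuclideanSpace ℝ (Fin n)) (t : ℝ) :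
    noetherCurrent Φ Ht u (EuclideanSpace.single (Fin.last n) 1) (emb x t) (Fin.last n)
      = hamIntegrand Φ Ht u x t := by
  have hgrad_last (i : Fin m) (y : EuclideanSpace ℝ (Fin (n + 1))) :
      gradient (u i) y (Fin.last n)
        = fderiv ℝ (u i) y (EuclideanSpace.single (Fin.last n) 1) := by
    rw [← inner_gradient_left, EuclideanSpace.inner_single_right]
    simp
  simp only [noetherCurrent, hamIntegrand, PiLp.sub_apply, PiLp.smul_apply, smul_eq_mul,
    PiLp.single_apply, if_true, mul_one, WithLp.ofLp_sum, Finset.sum_apply, hgrad_last,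
    sum_sub_distrib]
  rw [sub_right_comm]
  exact congr(_ - $(sum_congr rfl fun i _ => by ring) - _)

lemma inner_horizontalProj_noetherCurrent_single_last (Φ : ℝ → ℝ) (Ht : (Fin m → ℝ) → ℝ)
    {u : Fin m → EuclideanSpace ℝ (Fin (n + 1)) → ℝ} (hu : ∀ i, Differentiable ℝ (u i))
    (x w : EuclideanSpace ℝ (Fin n)) (t : ℝ) :
    ⟪horizontalProj n
        (noetherCurrent Φ Ht u (EuclideanSpace.single (Fin.last n) 1) (emb x t)), w⟫
      = -∑ i, deriv Φ (‖gradient (u i) (emb x t)‖ ^ 2)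
          * ⟪gradient (fun y => u i (emb y t)) x, w⟫
          * fderiv ℝ (u i) (emb x t) (EuclideanSpace.single (Fin.last n) 1) := by
  simp only [noetherCurrent, map_sub, map_smul, map_sum, horizontalProj_single_last, smul_zero,
    zero_sub, inner_neg_left, sum_inner, real_inner_smul_left, gradient_comp_emb (hu _ _)]
  exact congr(-$(sum_congr rfl fun i _ => by ring))

end NoetherCurrent

theorem hamiltonian_identity_general {n m : ℕ} {Φ : ℝ → ℝ} (hΦ : ContDiff ℝ 2 Φ)
    {Ht : (Fin m → ℝ) → ℝ} (hHt : ContDiff ℝ 1 Ht)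
    {u : Fin m → EuclideanSpace ℝ (Fin (n + 1)) → ℝ} (hu : ∀ i, ContDiff ℝ 2 (u i))
    (hsol : ∀ i x, -vdiv (fun y => deriv Φ (‖gradient (u i) y‖ ^ 2) • gradient (u i) y) x
      = fderiv ℝ Ht (fun j => u j x) (Pi.single i 1))
    {a b : ℝ} (ha : Integrable fun x' : EuclideanSpace ℝ (Fin n) => hamIntegrand Φ Ht u x' a)
    (hb : Integrable fun x' : EuclideanSpace ℝ (Fin n) => hamIntegrand Φ Ht u x' b)
    {R : ℕ → ℝ} (hR : Tendsto R atTop atTop)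
    (hbdry : Tendsto (fun k => ∫ s in a..b, ∫ x' in sphere (0 : EuclideanSpace ℝ (Fin n)) (R k),
      ∑ i, deriv Φ (‖gradient (u i) (emb x' s)‖ ^ 2)
        * ⟪gradient (fun y => u i (emb y s)) x', ‖x'‖⁻¹ • x'⟫
        * fderiv ℝ (u i) (emb x' s) (EuclideanSpace.single (Fin.last n) 1)
      ∂μH[(n : ℝ) - 1]) atTop (nhds 0)) :
    ∫ x' : EuclideanSpace ℝ (Fin n), hamIntegrand Φ Ht u x' b
      = ∫ x' : EuclideanSpace ℝ (Fin n), hamIntegrand Φ Ht u x' a := by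
  have hdiv (y) : vdiv (noetherCurrent Φ Ht u (EuclideanSpace.single (Fin.last n) 1)) y = 0 := by
    simp [vdiv_noetherCurrent hΦ hHt hu, ← hsol]
  simp_rw [← noetherCurrent_single_last_apply_last] at ha hb ⊢
  refine integral_last_emb_eq_of_vdiv_eq_zero (contDiff_noetherCurrent hΦ hHt hu _) hdiv ha hb hR ?_
  simpa only [inner_horizontalProj_noetherCurrent_single_last Φ Ht
    fun i => (hu i).differentiable two_ne_zero, integral_neg, intervalIntegral.integral_neg,
    neg_zero] using hbdry.neg

/-- **Hamiltonian identity** for solutions of the quasilinear system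
`-div(Φ'(|∇uᵢ|²)∇uᵢ) = Hᵢ(u)` on `ℝ^{n+1}` (dimensions `≥ 1`): writing
`x = (x', x_n)`, under the stated integrability, differentiation-under-the-integral
and vanishing-boundary-term assumptions, the quantity
`∫_{ℝⁿ} ( ∑ᵢ [ (1/2)Φ(|∇uᵢ|²) - Φ'(|∇uᵢ|²)|∂_{x_n}uᵢ|² ] - H̃(u) ) dx'`
is independent of `x_n`. -/
theorem hamiltonian_identity
    (n m : ℕ) (hm : 1 ≤ m)
    (Φ : ℝ → ℝ) (hΦ : ContDiff ℝ 2 Φ) (hΦ0 : Φ 0 = 0)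
    (hΦpos : ∀ s : ℝ, 0 < s → 0 < Φ s)
    (hΦ'pos : ∀ s : ℝ, 0 < s → 0 < deriv Φ s)
    (hΦell : ∀ s : ℝ, 0 < s → 0 < deriv Φ s + 2 * s * deriv (deriv Φ) s)
    (H : Fin m → (Fin m → ℝ) → ℝ) (hH : ∀ i, ContDiff ℝ 1 (H i))
    (Ht : (Fin m → ℝ) → ℝ) (hHt : ContDiff ℝ 2 Ht)
    (hHtgrad : ∀ i y, fderiv ℝ Ht y (Pi.single i 1) = H i y)
    (u : Fin m → EuclideanSpace ℝ (Fin (n + 1)) → ℝ)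
    (hu : ∀ i, ContDiff ℝ 2 (u i))
    (hsol : ∀ i x, -vdiv (fun y => deriv Φ (‖gradient (u i) y‖ ^ 2) • gradient (u i) y) x
        = H i (fun j => u j x))
    -- (i) integrability of the integrand on every horizontal slice
    (hint : ∀ t : ℝ, Integrable (fun x' : EuclideanSpace ℝ (Fin n) => hamIntegrand Φ Ht u x' t))
    -- (ii) differentiation under the integral sign is justified on every ball
    (hdiff : ∀ R : ℝ, 0 < R → ∀ t : ℝ,
      HasDerivAt (fun s : ℝ => ∫ x' in ball (0 : EuclideanSpace ℝ (Fin n)) R,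
          hamIntegrand Φ Ht u x' s)
        (∫ x' in ball (0 : EuclideanSpace ℝ (Fin n)) R,
          deriv (fun s : ℝ => hamIntegrand Φ Ht u x' s) t) t)
    -- (iii) the boundary terms vanish along a sequence of radii tending to infinity
    (hbdry : ∀ t : ℝ, ∃ R : ℕ → ℝ, Tendsto R atTop atTop ∧
      Tendsto (fun k => ∫ s in (0 : ℝ)..t,
          ∫ x' in sphere (0 : EuclideanSpace ℝ (Fin n)) (R k),
            ∑ i, deriv Φ (‖gradient (u i) (emb x' s)‖ ^ 2)
              * ⟪gradient (fun y => u i (emb y s)) x', ‖x'‖⁻¹ • x'⟫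
              * fderiv ℝ (u i) (emb x' s) (EuclideanSpace.single (Fin.last n) 1)
            ∂μH[(n : ℝ) - 1]) atTop (nhds 0)) :
    ∀ t : ℝ, (∫ x' : EuclideanSpace ℝ (Fin n), hamIntegrand Φ Ht u x' t)
      = ∫ x' : EuclideanSpace ℝ (Fin n), hamIntegrand Φ Ht u x' 0 := by
  exact fun t => have ⟨_, hR, hlat⟩ := hbdry t
    hamiltonian_identity_general hΦ (hHt.of_le one_le_two) hu
      (fun i x => (hsol i x).trans (hHtgrad i _).symm) (hint 0) (hint t) hR hlat
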